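/- Let γ=(γ_q)_{q≥1} be a sequence of real numbers and ψ:ℕ→[0,1/2]. For each q∈ℕ define A_q = {α ∈ [0,1] : ‖qα − γ_q‖ < ψ(q)}. Then for every nonempty open set U ⊆ [0,1] there exists q₀ = q₀(U) > 0 such that meas(A_q ∩ U) ≥ (1/2)·meas(A_q)·meas(U) for all q ≥ q₀. -/

import Mathlib

open MeasureTheory ENNReal

/-- Distance from a real number to the nearest integer. -/
noncomputable def distNearestInt (x : ℝ) : ℝ := |x - round x|

lemma dni_measurable : Measurable distNearestInt := by
  have : distNearestInt = fun x : ℝ => min (Int.fract x) (1 - Int.fract x) := by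
    funext x
    exact abs_sub_round_eq_min x
  rw [this]
  exact measurable_fract.min (measurable_const.sub measurable_fract)

lemma dni_sub_nat (x : ℝ) (k : ℕ) : distNearestInt (x - k) = distNearestInt x := by
  unfold distNearestInt
  rw [round_sub_natCast]
  push_cast
  congr 1
  ring

lemma mem_cell_iff (q : ℕ) (hq : 0 < q) (k : ℕ) (x : ℝ) :
    x ∈ Set.Ico ((k:ℝ)/q) (((k:ℝ)+1)/q) ↔ (k:ℝ) ≤ q * x ∧ q * x < k + 1 := by
  have : (0:ℝ) < q := by exact_mod_cast hq
  rw [Set.mem_Ico, div_le_iff₀ this, lt_div_iff₀ this, mul_comm x]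

lemma cell_measure (q : ℕ) (hq : 0 < q) (g p : ℝ) (k : ℕ) :
    volume ({α : ℝ | distNearestInt (q * α - g) < p} ∩ Set.Ico ((k:ℝ)/q) (((k:ℝ)+1)/q))
    = volume ({α : ℝ | distNearestInt (q * α - g) < p} ∩
        Set.Ico (((0:ℕ):ℝ)/q) ((((0:ℕ):ℝ)+1)/q)) := by
  have h0 : (q:ℝ) ≠ 0 := by exact_mod_cast hq.ne'
  rw [← measure_preimage_add_right volume (-((k:ℝ)/q)) ({α : ℝ | distNearestInt (q * α - g) < p} ∩
        Set.Ico (((0:ℕ):ℝ)/q) ((((0:ℕ):ℝ)+1)/q))]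
  congr 1
  ext x
  have e : (q:ℝ) * (x + -((k:ℝ)/q)) = q * x - k := by field_simp; ring
  have e2 : (q:ℝ) * x - k - g = (q * x - g) - k := by ring
  rw [Set.mem_preimage, Set.mem_inter_iff, Set.mem_inter_iff, mem_cell_iff q hq,
    mem_cell_iff q hq, Set.mem_setOf_eq, Set.mem_setOf_eq, e, e2, dni_sub_nat]
  push_cast
  constructor
  · rintro ⟨a, b, c⟩
    exact ⟨a, by linarith, by linarith⟩
  · rintro ⟨a, b, c⟩
    exact ⟨a, by linarith, by linarith⟩

lemma mem_some_cell (q : ℕ) (hq : 0 < q) (x : ℝ) (h0 : 0 ≤ x) (h1 : x < 1) :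
    ∃ k ∈ Finset.range q, x ∈ Set.Ico ((k:ℝ)/q) (((k:ℝ)+1)/q) := by
  have hq' : (0:ℝ) < q := by exact_mod_cast hq
  refine ⟨⌊(q:ℝ) * x⌋₊, ?_, ?_⟩
  · rw [Finset.mem_range, Nat.floor_lt (by positivity)]
    nlinarith
  · rw [mem_cell_iff q hq]
    exact ⟨Nat.floor_le (by positivity), Nat.lt_floor_add_one _⟩

theorem stmt12 (γ : ℕ → ℝ) (ψ : ℕ → ℝ) (hψ : ∀ q, ψ q ∈ Set.Icc (0:ℝ) (1/2))
    (A : ℕ → Set ℝ)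
    (hA : ∀ q, A q = {α ∈ Set.Icc (0:ℝ) 1 | distNearestInt (q * α - γ q) < ψ q})
    (U : Set ℝ) (hUopen : ∃ V : Set ℝ, IsOpen V ∧ U = V ∩ Set.Icc 0 1)
    (hUne : U.Nonempty) :
    ∃ q₀ : ℕ, 0 < q₀ ∧ ∀ q ≥ q₀,
      (1/2 : ℝ≥0∞) * volume (A q) * volume U ≤ volume (A q ∩ U) := by
  obtain ⟨V, hV, rfl⟩ := hUopen
  set W : Set ℝ := V ∩ Set.Ioo 0 1 with hW
  have hWo : IsOpen W := hV.inter isOpen_Ioo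
  have hUW : volume (V ∩ Set.Icc (0:ℝ) 1) = volume W := by
    apply measure_congr
    exact (Filter.EventuallyEq.refl _ V).inter Ioo_ae_eq_Icc.symm
  have hWsub : W ⊆ V ∩ Set.Icc 0 1 := Set.inter_subset_inter_right _ Set.Ioo_subset_Icc_self
  rw [hUW]
  by_cases hz : volume W = 0
  · exact ⟨1, one_pos, fun q _ => by simp [hz]⟩
  have hfin : volume W ≠ ⊤ := by
    refine ne_top_of_le_ne_top ?_ (measure_mono (Set.inter_subset_right : W ⊆ Set.Ioo 0 1))
    simp
  let Wn : ℕ → Set ℝ := fun n => {x | Metric.ball x (1/((n:ℝ)+1)) ⊆ W}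
  have hmono : Monotone Wn := by
    intro a b hab x hx
    exact (Metric.ball_subset_ball (Nat.one_div_le_one_div hab)).trans hx
  have hU : ⋃ n, Wn n = W := by
    ext x
    rw [Set.mem_iUnion]
    constructor
    · rintro ⟨n, hn⟩
      exact hn (Metric.mem_ball_self Nat.one_div_pos_of_nat)
    · intro hx
      obtain ⟨ε, hε, hb⟩ := Metric.isOpen_iff.1 hWo x hx
      obtain ⟨n, hn⟩ := exists_nat_one_div_lt hε
      exact ⟨n, (Metric.ball_subset_ball hn.le).trans hb⟩
  have hlt : (1/2 : ℝ≥0∞) * volume W < ⨆ n, volume (Wn n) := by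
    rw [← hmono.measure_iUnion, hU, one_div, mul_comm, ← div_eq_mul_inv]
    exact ENNReal.half_lt_self hz hfin
  obtain ⟨n, hn⟩ := lt_iSup_iff.1 hlt
  refine ⟨n + 1, Nat.succ_pos _, fun q hq => ?_⟩
  have hq0 : 0 < q := by omega
  have hq' : (0:ℝ) < q := by exact_mod_cast hq0
  let B : Set ℝ := {α : ℝ | distNearestInt (q * α - γ q) < ψ q}
  let C : ℕ → Set ℝ := fun k => Set.Ico ((k:ℝ)/q) (((k:ℝ)+1)/q)
  have hBm : MeasurableSet B :=
    measurableSet_lt (dni_measurable.comp ((measurable_const.mul measurable_id).sub_const _))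
      measurable_const
  have hm : ∀ k, volume (B ∩ C k) = volume (B ∩ C 0) := cell_measure q hq0 _ _
  have hCv : ∀ k, volume (C k) = (q:ℝ≥0∞)⁻¹ := by
    intro k
    simp only [C]
    rw [Real.volume_Ico, ← sub_div, add_sub_cancel_left, one_div,
      ENNReal.ofReal_inv_of_pos hq', ENNReal.ofReal_natCast]
  classical
  let S := (Finset.range q).filter (fun k => C k ⊆ W)
  -- covering of the inner set
  have h1 : (1/2 : ℝ≥0∞) * volume W ≤ S.card * (q:ℝ≥0∞)⁻¹ := by
    refine hn.le.trans ?_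
    have : Wn n ⊆ ⋃ k ∈ S, C k := by
      intro x hx
      have hxW : x ∈ W := hx (Metric.mem_ball_self Nat.one_div_pos_of_nat)
      obtain ⟨k, hk, hxk⟩ := mem_some_cell q hq0 x hxW.2.1.le hxW.2.2
      refine Set.mem_biUnion (x := k) ?_ hxk
      simp only [S, Finset.coe_filter, Set.mem_setOf_eq]
      refine ⟨hk, fun y hy => hx ?_⟩
      have hle : 1/(q:ℝ) ≤ 1/((n:ℝ)+1) := by
        apply one_div_le_one_div_of_le (by positivity)
        exact_mod_cast hq
      have hd : ((k:ℝ)+1)/q = k/q + 1/q := add_div _ _ _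
      have hy1 := hy.1
      have hy2 := hy.2
      have hx1 := hxk.1
      have hx2 := hxk.2
      rw [Metric.mem_ball, Real.dist_eq, abs_lt]
      constructor <;> linarith
    calc volume (Wn n) ≤ volume (⋃ k ∈ S, C k) := measure_mono this
      _ ≤ ∑ k ∈ S, volume (C k) := measure_biUnion_finset_le _ _
      _ = _ := by simp [hCv]
  have h2 : volume (A q) ≤ q * volume (B ∩ C 0) := by
    have : A q ⊆ (⋃ k ∈ Finset.range q, B ∩ C k) ∪ {1} := by
      intro x hx
      rw [hA] at hx
      rcases hx.1.2.lt_or_eq with h | h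
      · left
        obtain ⟨k, hk, hxk⟩ := mem_some_cell q hq0 x hx.1.1 h
        exact Set.mem_biUnion (x := k) hk ⟨hx.2, hxk⟩
      · right; exact h
    calc volume (A q) ≤ _ := measure_mono this
      _ ≤ volume (⋃ k ∈ Finset.range q, B ∩ C k) + volume {(1:ℝ)} := measure_union_le _ _
      _ ≤ ∑ k ∈ Finset.range q, volume (B ∩ C k) := by
        rw [Real.volume_singleton, add_zero]; exact measure_biUnion_finset_le _ _
      _ = _ := by simp [hm]
  have h3 : S.card * volume (B ∩ C 0) ≤ volume (A q ∩ (V ∩ Set.Icc 0 1)) := by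
    have hsub : (⋃ k ∈ S, B ∩ C k) ⊆ A q ∩ (V ∩ Set.Icc 0 1) := by
      refine Set.iUnion₂_subset fun k hk x hx => ?_
      have hxU := hWsub ((Finset.mem_filter.1 hk).2 hx.2)
      refine ⟨?_, hxU⟩
      rw [hA]
      exact ⟨hxU.2, hx.1⟩
    refine le_trans (le_of_eq ?_) (measure_mono hsub)
    rw [measure_biUnion_finset]
    · simp [hm]
    · intro i _ j _ hij
      refine Set.disjoint_left.2 fun x hi hj => hij ?_
      have a := (mem_cell_iff q hq0 i x).1 hi.2
      have b := (mem_cell_iff q hq0 j x).1 hj.2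
      have c : (i:ℝ) < j + 1 := by linarith
      have d : (j:ℝ) < i + 1 := by linarith
      have c' : i < j + 1 := by exact_mod_cast c
      have d' : j < i + 1 := by exact_mod_cast d
      omega
    · exact fun k _ => hBm.inter measurableSet_Ico
  calc (1/2 : ℝ≥0∞) * volume (A q) * volume W
      = volume (A q) * ((1/2 : ℝ≥0∞) * volume W) := by ring
    _ ≤ (q * volume (B ∩ C 0)) * (S.card * (q:ℝ≥0∞)⁻¹) := mul_le_mul' h2 h1
    _ = (q * (q:ℝ≥0∞)⁻¹) * (S.card * volume (B ∩ C 0)) := by ring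
    _ = S.card * volume (B ∩ C 0) := by
      rw [ENNReal.mul_inv_cancel (by exact_mod_cast hq0.ne') (ENNReal.natCast_ne_top q), one_mul]
    _ ≤ _ := h3
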